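/- Let P₁ ⊆ ℕ^{d'} × ℕ^{m} and P₂ ⊆ ℕ^{m} × ℕ^{d''} be smooth periodic relations satisfying property (2'). Then P₁ ∘ P₂ is a smooth periodic relation satisfying property (2'). -/

import Mathlib

/-- Vectors of naturals of dimension `d`. -/
abbrev NVec (d : ℕ) := Fin d → ℕ

/-- A relation `⊆ ℕ^a × ℕ^b`, viewed as a subset of `ℕ^{a+b}`. -/
abbrev PairN (a b : ℕ) := (Fin a → ℕ) × (Fin b → ℕ)

/-- The corresponding rational space `ℚ^a × ℚ^b ≅ ℚ^{a+b}`. -/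
abbrev PairQ (a b : ℕ) := (Fin a → ℚ) × (Fin b → ℚ)

/-- Coordinatewise cast of a pair of natural vectors into rational vectors. -/
def castPQ {a b : ℕ} (x : PairN a b) : PairQ a b :=
  (fun i => (x.1 i : ℚ), fun i => (x.2 i : ℚ))

/-- A set in a commutative monoid is periodic if it contains `0` and is closed
under addition. -/
def IsPeriodic {M : Type*} [AddCommMonoid M] (P : Set M) : Prop :=
  0 ∈ P ∧ ∀ p ∈ P, ∀ q ∈ P, p + q ∈ P

/-- `P ⊆ ℕ^{a+b}` is well-directed: every sequence of elements of `P` has an infinite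
subsequence `(p_{m_k})` such that `p_{m_j} + ℕ·(p_{m_k} − p_{m_j}) ⊆ P` for all
`j ≤ k`. -/
def WellDirected {a b : ℕ} (P : Set (PairN a b)) : Prop :=
  ∀ p : ℕ → PairN a b, (∀ m, p m ∈ P) →
    ∃ φ : ℕ → ℕ, StrictMono φ ∧
      ∀ j k : ℕ, j ≤ k → ∀ t : ℕ, ∃ q ∈ P,
        castPQ q = castPQ (p (φ j)) + (t : ℚ) • (castPQ (p (φ k)) - castPQ (p (φ j)))

/-- Composition of relations. -/
def RelComp {α β γ : Type*} (R : Set (α × β)) (S : Set (β × γ)) : Set (α × γ) :=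
  {p | ∃ x, (p.1, x) ∈ R ∧ (x, p.2) ∈ S}

/-- `v ∈ ℚ^{a+b}` is a direction of `P ⊆ ℕ^{a+b}`: some full line `x + ℕ·(n v)` with
`n > 0` is contained in `P`. -/
def IsDirection {a b : ℕ} (P : Set (PairN a b)) (v : PairQ a b) : Prop :=
  ∃ n : ℕ, 0 < n ∧ ∃ x : PairN a b, ∀ k : ℕ, ∃ p ∈ P,
    castPQ p = castPQ x + ((k * n : ℕ) : ℚ) • v

/-- The set of directions of `P`. -/
def dirSet {a b : ℕ} (P : Set (PairN a b)) : Set (PairQ a b) := {v | IsDirection P v}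

/-- A cone: contains `0`, closed under addition and under multiplication by positive
rationals. -/
def IsCone {a b : ℕ} (C : Set (PairQ a b)) : Prop :=
  0 ∈ C ∧ (∀ u ∈ C, ∀ v ∈ C, u + v ∈ C) ∧ ∀ u ∈ C, ∀ l : ℚ, 0 < l → l • u ∈ C

/-- Definable subsets of `ℚ^{a+b}`: finite Boolean combinations of half-spaces
(equivalently, first-order definable over `(ℚ,+,≥)`). -/
inductive IsQDef {a b : ℕ} : Set (PairQ a b) → Prop
  | halfspace (c : PairQ a b) (t : ℚ) :
      IsQDef {x | t ≤ (∑ i, c.1 i * x.1 i) + ∑ i, c.2 i * x.2 i}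
  | compl {S : Set (PairQ a b)} : IsQDef S → IsQDef Sᶜ
  | inter {S T : Set (PairQ a b)} : IsQDef S → IsQDef T → IsQDef (S ∩ T)

/-- `P` is asymptotically definable if its set of directions is a definable cone. -/
def AsymptoticallyDefinable {a b : ℕ} (P : Set (PairN a b)) : Prop :=
  IsCone (dirSet P) ∧ IsQDef (dirSet P)

/-- `P` is smooth if it is asymptotically definable and well-directed. -/
def IsSmooth {a b : ℕ} (P : Set (PairN a b)) : Prop :=
  AsymptoticallyDefinable P ∧ WellDirected P

/-- Property (2'): for every well-directed periodic relation `P ⊆ bigP` there is a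
definable cone `R ⊇ dir(P)` such that every `(e,f) ∈ R` can be pumped starting from
some element of `P`: there are `(a,b) ∈ P` and `n > 0` with `(a,b) + ℕ·n·(e,f) ⊆ bigP`. -/
def Prop2' {a b : ℕ} (bigP : Set (PairN a b)) : Prop :=
  ∀ P : Set (PairN a b), P ⊆ bigP → IsPeriodic P → WellDirected P →
    ∃ R : Set (PairQ a b), IsCone R ∧ IsQDef R ∧ dirSet P ⊆ R ∧
      ∀ ef ∈ R, ∃ ab ∈ P, ∃ n : ℕ, 0 < n ∧
        ∀ k : ℕ, ∃ p ∈ bigP, castPQ p = castPQ ab + ((k * n : ℕ) : ℚ) • ef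

/-!
Let `Q ⊆ P₁ ∘ P₂` be periodic and well-directed, and let `T` be the set of triples `(v, x, w)`
with `(v, x) ∈ P₁`, `(x, w) ∈ P₂` and `(v, w) ∈ Q`. It is periodic and well-directed because `P₁`,
`P₂` and `Q` are, hence so are its projections to `P₁` and `P₂`, to which property (2') attaches
definable cones `R₁` and `R₂`. Then `R₁ ∘ R₂` is the cone wanted for `Q`. A direction of `Q` lifts
to a direction of `T` by well-directedness. Conversely, if `(e, g) ∈ R₁` is pumped from the triple
`z₁` and `(g, f) ∈ R₂` from the triple `z₂`, then both can be pumped from `z₁ + z₂`, where the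
middle coordinates agree, so that the two rays compose. Definability of `R₁ ∘ R₂` is quantifier
elimination over ordered fields.

Property (2') for `P₁ ∘ P₂` itself then forces its directions to form a definable cone.
-/

theorem affineMap_apply_prodMk {K V : Type*} [CommRing K] [AddCommGroup V] [Module K V]
    (f : V × K →ᵃ[K] K) (x : V) (y : K) :
    f (x, y) = f (x, 0) + y * f.linear (0, 1) := by
  have hlin : f.linear (0, y) = y * f.linear (0, 1) := by
    simpa using f.linear.map_smul y (0, 1)
  simpa [add_comm, hlin] using f.map_vadd (x, 0) (0, y)

theorem exists_greatest_lt {ι α : Type*} [LinearOrder α] {T : Set ι} (hT : T.Finite) (v : ι → α)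
    (y : α) : (∀ i ∈ T, ¬ v i < y) ∨ ∃ l ∈ T, v l < y ∧ ∀ i ∈ T, v i < y → v i ≤ v l := by
  rcases {i ∈ T | v i < y}.eq_empty_or_nonempty with hempty | hne
  · exact .inl fun i hi hiy ↦ hempty.subset ⟨hi, hiy⟩
  · obtain ⟨l, ⟨hl, hly⟩, hmax⟩ := Set.exists_max_image _ v (hT.subset (Set.sep_subset _ _)) hne
    exact .inr ⟨l, hl, hly, fun i hi hiy ↦ hmax i ⟨hi, hiy⟩⟩

theorem exists_least_gt {ι α : Type*} [LinearOrder α] {T : Set ι} (hT : T.Finite) (v : ι → α)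
    (y : α) : (∀ i ∈ T, ¬ y < v i) ∨ ∃ u ∈ T, y < v u ∧ ∀ i ∈ T, y < v i → v u ≤ v i :=
  exists_greatest_lt (α := αᵒᵈ) hT v y

section Semilinear

open MeasureTheory SignType

variable {K V W : Type*} [Field K] [LinearOrder K]
  [AddCommGroup V] [Module K V] [AddCommGroup W] [Module K W]

variable (K V) in
/-- The semilinear subsets of a vector space over an ordered field, that is the finite Boolean
combinations of closed affine half-spaces. It extends `IsQDef` to arbitrary vector spaces, so that
coordinates can be eliminated one at a time. -/
def semilinearAlgebra : Set (Set V) :=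
  generateSetAlgebra (Set.range fun f : V →ᵃ[K] K ↦ {x | 0 ≤ f x})

theorem isSetAlgebra_semilinearAlgebra : IsSetAlgebra (semilinearAlgebra K V) :=
  isSetAlgebra_generateSetAlgebra

theorem preimage_mem_semilinearAlgebra {S : Set V} (hS : S ∈ semilinearAlgebra K V)
    (g : W →ᵃ[K] V) : g ⁻¹' S ∈ semilinearAlgebra K W := by
  induction hS with
  | base _ h =>
    obtain ⟨f, rfl⟩ := h
    exact generateSetAlgebra.base _ ⟨f.comp g, rfl⟩
  | empty => exact generateSetAlgebra.empty
  | compl _ _ ih => exact ih.compl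
  | union _ _ _ _ ihS ihT => exact ihS.union _ _ ihT

variable [IsStrictOrderedRing K]

theorem exists_finite_determining_mem {S : Set (V × K)} (hS : S ∈ semilinearAlgebra K (V × K)) :
    ∃ T : Set (V →ᵃ[K] K), T.Finite ∧ ∀ x y z,
      (∀ τ ∈ T, sign (z - τ x) = sign (y - τ x)) → ((x, z) ∈ S ↔ (x, y) ∈ S) := by
  induction hS with
  | base _ h =>
    obtain ⟨f, rfl⟩ := h
    set c := f.linear (0, 1)
    let root : V →ᵃ[K] K := -c⁻¹ • f.comp (LinearMap.inl K V K).toAffineMap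
    refine ⟨{root}, Set.finite_singleton _, fun x y z h ↦ ?_⟩
    have hf (w : K) : f (x, w) = f (x, 0) + w * c := affineMap_apply_prodMk f x w
    by_cases hc : c = 0
    · simp [hf y, hf z, hc]
    · have hroot (w : K) : f (x, w) = c * (w - root x) := by
        rw [hf]
        simp only [root, AffineMap.coe_smul, Pi.smul_apply, AffineMap.coe_comp, smul_eq_mul,
          Function.comp_apply, LinearMap.coe_toAffineMap, LinearMap.inl_apply]
        field_simp
        ring
      have hsign : sign (f (x, z)) = sign (f (x, y)) := by
        rw [hroot, hroot, sign_mul, sign_mul, h root rfl]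
      simp only [Set.mem_ofPred_eq]
      rw [← sign_nonneg_iff, hsign, sign_nonneg_iff]
  | empty => exact ⟨∅, Set.finite_empty, fun _ _ _ _ ↦ Iff.rfl⟩
  | compl _ _ ih =>
    obtain ⟨T, hT, hST⟩ := ih
    exact ⟨T, hT, fun x y z h ↦ not_congr (hST x y z h)⟩
  | union _ _ _ _ ih ih' =>
    obtain ⟨T, hT, hST⟩ := ih
    obtain ⟨T', hT', hST'⟩ := ih'
    exact ⟨T ∪ T', hT.union hT', fun x y z h ↦
      or_congr (hST x y z fun τ hτ ↦ h τ (.inl hτ)) (hST' x y z fun τ hτ ↦ h τ (.inr hτ))⟩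

theorem sign_sub_eq_of_lt_imp_lt {a y z : K} (ha : a ≠ y) (hlt : a < y → a < z)
    (hgt : y < a → z < a) : sign (z - a) = sign (y - a) := by
  rcases ha.lt_or_gt with h | h
  · rw [sign_pos (sub_pos.2 h), sign_pos (sub_pos.2 (hlt h))]
  · rw [sign_neg (sub_neg.2 h), sign_neg (sub_neg.2 (hgt h))]

/-- The idea of Ferrante–Rackoff quantifier elimination: `y` may be replaced by one of finitely
many expressions in the values `v i`, since only its position among them matters. -/
theorem exists_testPoint {ι : Type*} {T : Set ι} (hT : T.Finite) (v : ι → K) (y : K) :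
    ∃ z, (∀ i ∈ T, sign (z - v i) = sign (y - v i)) ∧
      (z = 0 ∨ (∃ i ∈ T, z = v i + 1 ∨ z = v i - 1) ∨
        ∃ i ∈ T, ∃ j ∈ T, z = (v i + v j) / 2) := by
  by_cases hy : ∃ i ∈ T, v i = y
  · obtain ⟨i, hi, rfl⟩ := hy
    exact ⟨v i, fun _ _ ↦ rfl, .inr <| .inr ⟨i, hi, i, hi, (add_self_div_two _).symm⟩⟩
  push Not at hy
  suffices ∃ z, (∀ i ∈ T, v i < y → v i < z) ∧ (∀ i ∈ T, y < v i → z < v i) ∧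
      (z = 0 ∨ (∃ i ∈ T, z = v i + 1 ∨ z = v i - 1) ∨
        ∃ i ∈ T, ∃ j ∈ T, z = (v i + v j) / 2) by
    obtain ⟨z, hlt, hgt, hz⟩ := this
    exact ⟨z, fun i hi ↦ sign_sub_eq_of_lt_imp_lt (hy i hi) (hlt i hi) (hgt i hi), hz⟩
  rcases exists_greatest_lt hT v y with hno | ⟨l, hl, hly, hmax⟩ <;>
    rcases exists_least_gt hT v y with hno' | ⟨u, hu, hyu, hmin⟩
  · exact ⟨0, fun i hi h ↦ (hno i hi h).elim, fun i hi h ↦ (hno' i hi h).elim, .inl rfl⟩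
  · exact ⟨v u - 1, fun i hi h ↦ (hno i hi h).elim,
      fun i hi h ↦ (sub_one_lt _).trans_le (hmin i hi h), .inr <| .inl ⟨u, hu, .inr rfl⟩⟩
  · exact ⟨v l + 1, fun i hi h ↦ (hmax i hi h).trans_lt (lt_add_one _),
      fun i hi h ↦ (hno' i hi h).elim, .inr <| .inl ⟨l, hl, .inl rfl⟩⟩
  · have hlu : v l < v u := hly.trans hyu
    exact ⟨(v l + v u) / 2,
      fun i hi h ↦ (hmax i hi h).trans_lt (left_lt_add_div_two.2 hlu),
      fun i hi h ↦ (add_div_two_lt_right.2 hlu).trans_le (hmin i hi h),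
      .inr <| .inr ⟨l, hl, u, hu, rfl⟩⟩

theorem exists_finite_testSections {T : Set (V →ᵃ[K] K)} (hT : T.Finite) :
    ∃ G : Set (V →ᵃ[K] K), G.Finite ∧
      ∀ x y, ∃ σ ∈ G, ∀ τ ∈ T, sign (σ x - τ x) = sign (y - τ x) := by
  let one : V →ᵃ[K] K := AffineMap.const K V 1
  refine ⟨{0} ∪ ((· + one) '' T ∪ (· - one) '' T) ∪
      Set.image2 (fun τ τ' ↦ (2⁻¹ : K) • (τ + τ')) T T,
    ((Set.finite_singleton _).union ((hT.image _).union (hT.image _))).union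
      (hT.image2 _ hT), fun x y ↦ ?_⟩
  obtain ⟨z, hz, rfl | ⟨τ, hτ, rfl | rfl⟩ | ⟨τ, hτ, τ', hτ', rfl⟩⟩ :=
    exists_testPoint hT (fun τ : V →ᵃ[K] K ↦ τ x) y
  · exact ⟨0, by simp, hz⟩
  · exact ⟨τ + one, .inl <| .inr <| .inl ⟨τ, hτ, rfl⟩, hz⟩
  · exact ⟨τ - one, .inl <| .inr <| .inr ⟨τ, hτ, rfl⟩, hz⟩
  · refine ⟨(2⁻¹ : K) • (τ + τ'), .inr ⟨τ, hτ, τ', hτ', rfl⟩, ?_⟩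
    simpa only [AffineMap.coe_smul, AffineMap.coe_add, Pi.smul_apply, Pi.add_apply, smul_eq_mul,
      inv_mul_eq_div] using hz

theorem image_fst_mem_semilinearAlgebra {S : Set (V × K)}
    (hS : S ∈ semilinearAlgebra K (V × K)) : Prod.fst '' S ∈ semilinearAlgebra K V := by
  obtain ⟨T, hT, hST⟩ := exists_finite_determining_mem hS
  obtain ⟨G, hG, hTG⟩ := exists_finite_testSections hT
  have hS_eq : Prod.fst '' S = ⋃ σ ∈ hG.toFinset, (AffineMap.id K V).prod σ ⁻¹' S := by
    ext x
    simp only [Set.mem_image, Prod.exists, exists_and_right, exists_eq_right, Set.mem_iUnion,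
      Set.Finite.mem_toFinset, Set.mem_preimage, AffineMap.prod_apply, AffineMap.id_apply,
      exists_prop]
    refine ⟨fun ⟨y, hy⟩ ↦ ?_, fun ⟨σ, _, h⟩ ↦ ⟨σ x, h⟩⟩
    obtain ⟨σ, hσ, h⟩ := hTG x y
    exact ⟨σ, hσ, (hST x y (σ x) h).2 hy⟩
  rw [hS_eq]
  exact isSetAlgebra_semilinearAlgebra.biUnion_mem _ fun σ _ ↦ preimage_mem_semilinearAlgebra hS _

theorem image_fst_pi_mem_semilinearAlgebra (n : ℕ) {S : Set (V × (Fin n → K))}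
    (hS : S ∈ semilinearAlgebra K (V × (Fin n → K))) :
    Prod.fst '' S ∈ semilinearAlgebra K V := by
  induction n with
  | zero =>
    convert! preimage_mem_semilinearAlgebra hS (LinearMap.inl K V (Fin 0 → K)).toAffineMap using 1
    ext x
    simp [Unique.exists_iff, Subsingleton.elim default (0 : Fin 0 → K)]
  | succ n ih =>
    let e : ((V × (Fin n → K)) × K) ≃ₗ[K] V × (Fin (n + 1) → K) :=
      (LinearEquiv.prodAssoc K V (Fin n → K) K).trans <| (LinearEquiv.refl K V).prodCongr <|
        (LinearEquiv.prodComm K (Fin n → K) K).trans (Fin.consLinearEquiv K fun _ ↦ K)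
    have hS_eq : Prod.fst '' S = Prod.fst '' (Prod.fst '' (e ⁻¹' S)) := by
      conv_lhs => rw [← Set.image_preimage_eq S e.surjective, Set.image_image]
      rw [Set.image_image]
      rfl
    rw [hS_eq]
    exact ih (image_fst_mem_semilinearAlgebra
      (preimage_mem_semilinearAlgebra hS e.toLinearMap.toAffineMap))

end Semilinear

section IsQDef

open MeasureTheory

variable {a m b : ℕ}

theorem isSetAlgebra_isQDef : IsSetAlgebra {S : Set (PairQ a b) | IsQDef S} where
  empty_mem := by
    have h := IsQDef.halfspace (a := a) (b := b) 0 1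
    simpa [Set.ofPred_false, not_le.2 (zero_lt_one' ℚ)] using h
  compl_mem _ hS := hS.compl
  union_mem S T hS hT := by
    simpa [Set.compl_inter] using (hS.compl.inter hT.compl).compl

theorem isQDef_iff_mem_semilinearAlgebra {S : Set (PairQ a b)} :
    IsQDef S ↔ S ∈ semilinearAlgebra ℚ (PairQ a b) := by
  refine ⟨fun h ↦ ?_, fun h ↦ isSetAlgebra_isQDef.generateSetAlgebra_subset ?_ h⟩
  · induction h with
    | halfspace c t =>
      let f : PairQ a b →ₗ[ℚ] ℚ := (dotProductEquiv ℚ _ c.1).coprod (dotProductEquiv ℚ _ c.2)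
      refine generateSetAlgebra.base _ ⟨f.toAffineMap - AffineMap.const ℚ _ t, ?_⟩
      simp [f, dotProduct]
    | compl _ ih => exact ih.compl
    | inter _ _ ihS ihT => exact isSetAlgebra_semilinearAlgebra.inter_mem ihS ihT
  · rintro _ ⟨f, rfl⟩
    let c : PairQ a b := ((dotProductEquiv ℚ _).symm (f.linear ∘ₗ LinearMap.inl ℚ _ _),
      (dotProductEquiv ℚ _).symm (f.linear ∘ₗ LinearMap.inr ℚ _ _))
    have hc (x : PairQ a b) : c.1 ⬝ᵥ x.1 + c.2 ⬝ᵥ x.2 = f.linear x := by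
      simp only [c, ← dotProductEquiv_apply_apply, LinearEquiv.apply_symm_apply,
        LinearMap.comp_apply, LinearMap.inl_apply, LinearMap.inr_apply]
      rw [← map_add, Prod.mk_add_mk, add_zero, zero_add]
    convert! IsQDef.halfspace c (-f 0) using 2
    ext x
    change _ ↔ -f 0 ≤ c.1 ⬝ᵥ x.1 + c.2 ⬝ᵥ x.2
    rw [hc, neg_le_iff_add_nonneg, f.decomp']
    simp

theorem IsQDef.relComp {R : Set (PairQ a m)} {S : Set (PairQ m b)}
    (hR : IsQDef R) (hS : IsQDef S) : IsQDef (RelComp R S) := by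
  rw [isQDef_iff_mem_semilinearAlgebra] at *
  let left : PairQ a b × (Fin m → ℚ) →ₗ[ℚ] PairQ a m :=
    (LinearMap.fst ℚ _ _ ∘ₗ LinearMap.fst ℚ _ _).prod (LinearMap.snd ℚ _ _)
  let right : PairQ a b × (Fin m → ℚ) →ₗ[ℚ] PairQ m b :=
    (LinearMap.snd ℚ _ _).prod (LinearMap.snd ℚ _ _ ∘ₗ LinearMap.fst ℚ _ _)
  have hRS : RelComp R S = Prod.fst '' (left ⁻¹' R ∩ right ⁻¹' S) := by
    ext p
    simp [RelComp, left, right]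
  rw [hRS]
  exact image_fst_pi_mem_semilinearAlgebra m <| isSetAlgebra_semilinearAlgebra.inter_mem
    (preimage_mem_semilinearAlgebra hR left.toAffineMap)
    (preimage_mem_semilinearAlgebra hS right.toAffineMap)

end IsQDef

section Periodic

variable {M N : Type*} [AddCommMonoid M] [AddCommMonoid N] {P : Set M} {Q : Set N}

theorem IsPeriodic.image (hP : IsPeriodic P) (f : M →+ N) : IsPeriodic (f '' P) := by
  refine ⟨⟨0, hP.1, map_zero f⟩, ?_⟩
  rintro _ ⟨p, hp, rfl⟩ _ ⟨q, hq, rfl⟩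
  exact ⟨p + q, hP.2 p hp q hq, map_add f p q⟩

theorem IsPeriodic.prod (hP : IsPeriodic P) (hQ : IsPeriodic Q) : IsPeriodic (P ×ˢ Q) :=
  ⟨⟨hP.1, hQ.1⟩, fun _ hp _ hq ↦ ⟨hP.2 _ hp.1 _ hq.1, hQ.2 _ hp.2 _ hq.2⟩⟩

theorem IsPeriodic.inter_eqLocus (hP : IsPeriodic P) (f g : M →+ N) :
    IsPeriodic (P ∩ f.eqLocusM g) :=
  ⟨⟨hP.1, zero_mem _⟩, fun p hp q hq ↦ ⟨hP.2 p hp.1 q hq.1, add_mem hp.2 hq.2⟩⟩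

theorem IsPeriodic.inter_preimage (hP : IsPeriodic P) (hQ : IsPeriodic Q) (f : M →+ N) :
    IsPeriodic (P ∩ f ⁻¹' Q) := by
  refine ⟨⟨hP.1, by simpa using hQ.1⟩, fun p hp q hq ↦ ⟨hP.2 p hp.1 q hq.1, ?_⟩⟩
  simpa using hQ.2 _ hp.2 _ hq.2

end Periodic

section AddWellDirected

variable {M N : Type*} [AddCommMonoid M] [AddCommMonoid N] {P : Set M} {Q : Set N} {p q : M}

/-- The points `p + t (q - p)`, `t ∈ ℕ`, exist and lie in `P`. The equation is arranged so that
nothing is subtracted, and `r` is the only solution as soon as `M` is cancellative. -/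
def IsPumpable (P : Set M) (p q : M) : Prop :=
  ∀ t : ℕ, ∃ r ∈ P, r + t • p = p + t • q

theorem IsPumpable.image (h : IsPumpable P p q) (f : M →+ N) :
    IsPumpable (f '' P) (f p) (f q) := by
  intro t
  obtain ⟨r, hr, heq⟩ := h t
  exact ⟨f r, ⟨r, hr, rfl⟩, by simpa using congrArg f heq⟩

theorem IsPumpable.prod {p q : M × N} (hP : IsPumpable P p.1 q.1) (hQ : IsPumpable Q p.2 q.2) :
    IsPumpable (P ×ˢ Q) p q := by
  intro t
  obtain ⟨r, hr, heq⟩ := hP t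
  obtain ⟨s, hs, heq'⟩ := hQ t
  exact ⟨(r, s), ⟨hr, hs⟩, Prod.ext heq heq'⟩

theorem IsPumpable.inter_eqLocus [IsCancelAdd N] (h : IsPumpable P p q) {f g : M →+ N}
    (hp : f p = g p) (hq : f q = g q) : IsPumpable (P ∩ f.eqLocusM g) p q := by
  intro t
  obtain ⟨r, hr, heq⟩ := h t
  refine ⟨r, ⟨hr, ?_⟩, heq⟩
  have hf : f r + t • f p = f p + t • f q := by simpa using congrArg f heq
  have hg : g r + t • f p = f p + t • f q := by simpa [hp, hq] using congrArg g heq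
  exact add_right_cancel (hf.trans hg.symm)

/-- Well-directedness in an arbitrary additive commutative monoid. It agrees with `WellDirected` on
relations, see `wellDirected_iff_addWellDirected`. -/
def AddWellDirected (P : Set M) : Prop :=
  ∀ p : ℕ → M, (∀ n, p n ∈ P) →
    ∃ φ : ℕ → ℕ, StrictMono φ ∧ ∀ j k, j ≤ k → IsPumpable P (p (φ j)) (p (φ k))

theorem AddWellDirected.image (hP : AddWellDirected P) (f : M →+ N) :
    AddWellDirected (f '' P) := by
  intro p hp
  choose s hs hsp using hp
  obtain ⟨φ, hφ, hpump⟩ := hP s hs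
  exact ⟨φ, hφ, fun j k hjk ↦ by simpa only [hsp] using (hpump j k hjk).image f⟩

theorem AddWellDirected.prod (hP : AddWellDirected P) (hQ : AddWellDirected Q) :
    AddWellDirected (P ×ˢ Q) := by
  intro p hp
  obtain ⟨φ, hφ, hpump⟩ := hP (fun n ↦ (p n).1) fun n ↦ (hp n).1
  obtain ⟨ψ, hψ, hpump'⟩ := hQ (fun n ↦ (p (φ n)).2) fun n ↦ (hp (φ n)).2
  exact ⟨φ ∘ ψ, hφ.comp hψ, fun j k hjk ↦
    (hpump _ _ (hψ.monotone hjk)).prod (hpump' j k hjk)⟩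

theorem AddWellDirected.inter_eqLocus [IsCancelAdd N] (hP : AddWellDirected P) (f g : M →+ N) :
    AddWellDirected (P ∩ f.eqLocusM g) := by
  intro p hp
  obtain ⟨φ, hφ, hpump⟩ := hP p fun n ↦ (hp n).1
  exact ⟨φ, hφ, fun j k hjk ↦ (hpump j k hjk).inter_eqLocus (hp _).2 (hp _).2⟩

theorem AddWellDirected.inter_preimage [IsCancelAdd N] (hP : AddWellDirected P)
    (hQ : AddWellDirected Q) (f : M →+ N) : AddWellDirected (P ∩ f ⁻¹' Q) := by
  have h := ((hP.prod hQ).inter_eqLocus (f.comp (.fst M N)) (.snd M N)).image (.fst M N)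
  convert! h using 1
  ext p
  simp [AddMonoidHom.mem_eqLocusM, and_assoc]

end AddWellDirected

section Rays

variable {a b c : ℕ}

theorem castPQ_injective : Function.Injective (castPQ : PairN a b → PairQ a b) := by
  intro p q h
  simp only [castPQ, Prod.mk.injEq, funext_iff, Nat.cast_inj] at h
  exact Prod.ext (funext h.1) (funext h.2)

theorem castPQ_add (p q : PairN a b) : castPQ (p + q) = castPQ p + castPQ q := by
  ext <;> simp [castPQ]

theorem castPQ_nsmul (t : ℕ) (p : PairN a b) : castPQ (t • p) = (t : ℚ) • castPQ p := by
  ext <;> simp [castPQ]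

theorem castPQ_eq_add_smul_sub_iff {p q r : PairN a b} {t : ℕ} :
    castPQ r = castPQ p + (t : ℚ) • (castPQ q - castPQ p) ↔ r + t • p = p + t • q := by
  rw [← castPQ_injective.eq_iff]
  simp only [castPQ_add, castPQ_nsmul]
  rw [smul_sub, ← add_sub_assoc, eq_sub_iff_add_eq]

theorem wellDirected_iff_addWellDirected {P : Set (PairN a b)} :
    WellDirected P ↔ AddWellDirected P := by
  simp only [WellDirected, AddWellDirected, IsPumpable, castPQ_eq_add_smul_sub_iff]

/-- Some ray of lattice points of `P` starts at `x` and has direction `v`. This is the pumping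
condition that appears in both `IsDirection` and `Prop2'`. -/
def HasRay (P : Set (PairN a b)) (x : PairN a b) (v : PairQ a b) : Prop :=
  ∃ n : ℕ, 0 < n ∧ ∀ k : ℕ, ∃ p ∈ P, castPQ p = castPQ x + ((k * n : ℕ) : ℚ) • v

variable {P : Set (PairN a b)} {x : PairN a b} {v : PairQ a b}

theorem mem_dirSet_iff_exists_hasRay : v ∈ dirSet P ↔ ∃ x, HasRay P x v :=
  ⟨fun ⟨n, hn, x, hx⟩ ↦ ⟨x, n, hn, hx⟩, fun ⟨x, n, hn, hx⟩ ↦ ⟨n, hn, x, hx⟩⟩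

theorem HasRay.inv_smul (h : HasRay P x v) {r : ℕ} (hr : 0 < r) :
    HasRay P x ((r : ℚ)⁻¹ • v) := by
  obtain ⟨n, hn, hray⟩ := h
  refine ⟨n * r, Nat.mul_pos hn hr, fun k ↦ ?_⟩
  have hr' : (r : ℚ) ≠ 0 := Nat.cast_ne_zero.2 hr.ne'
  simpa only [← mul_assoc, Nat.cast_mul (k * n) r, mul_smul, smul_inv_smul₀ hr'] using hray k

theorem HasRay.add_mem (hP : IsPeriodic P) (h : HasRay P x v) {q : PairN a b} (hq : q ∈ P) :
    HasRay P (x + q) v := by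
  obtain ⟨n, hn, hray⟩ := h
  refine ⟨n, hn, fun k ↦ ?_⟩
  obtain ⟨p, hp, heq⟩ := hray k
  exact ⟨p + q, hP.2 p hp q hq, by rw [castPQ_add, castPQ_add, heq, add_right_comm]⟩

theorem IsPumpable.hasRay {p q : PairN a b} (h : IsPumpable P p q) :
    HasRay P p (castPQ q - castPQ p) := by
  refine ⟨1, one_pos, fun t ↦ ?_⟩
  simpa only [mul_one, castPQ_eq_add_smul_sub_iff] using h t

/-- Well-directedness turns the merely pointwise preimages of a ray into an honest ray. -/
theorem AddWellDirected.exists_isPumpable_of_mem_dirSet_image {M : Type*} [AddCommMonoid M]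
    {T : Set M} (hT : AddWellDirected T) (f : M →+ PairN a b) (hv : v ∈ dirSet (f '' T)) :
    ∃ p ∈ T, ∃ q ∈ T, IsPumpable T p q ∧
      ∃ r : ℕ, 0 < r ∧ castPQ (f q) - castPQ (f p) = (r : ℚ) • v := by
  obtain ⟨n, hn, x, hray⟩ := hv
  simp only [Set.exists_mem_image] at hray
  choose s hs heq using hray
  obtain ⟨φ, hφ, hpump⟩ := hT s hs
  have hlt : φ 0 < φ 1 := hφ one_pos
  refine ⟨_, hs (φ 0), _, hs (φ 1), hpump 0 1 zero_le_one, (φ 1 - φ 0) * n,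
    Nat.mul_pos (Nat.sub_pos_of_lt hlt) hn, ?_⟩
  rw [heq, heq, add_sub_add_left_eq_sub, ← sub_smul, Nat.sub_mul,
    Nat.cast_sub (Nat.mul_le_mul_right n hlt.le)]

theorem HasRay.relComp {P : Set (PairN a b)} {Q : Set (PairN b c)} {p : PairN a b} {q : PairN b c}
    {u : Fin a → ℚ} {v : Fin b → ℚ} {w : Fin c → ℚ} (hP : HasRay P p (u, v))
    (hQ : HasRay Q q (v, w)) (hpq : p.2 = q.1) : HasRay (RelComp P Q) (p.1, q.2) (u, w) := by
  obtain ⟨n, hn, hrayP⟩ := hP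
  obtain ⟨n', hn', hrayQ⟩ := hQ
  refine ⟨n * n', Nat.mul_pos hn hn', fun k ↦ ?_⟩
  obtain ⟨⟨x, y⟩, hxy, heq⟩ := hrayP (k * n')
  obtain ⟨⟨y', z⟩, hyz, heq'⟩ := hrayQ (k * n)
  rw [mul_assoc, mul_comm n'] at heq
  rw [mul_assoc] at heq'
  obtain ⟨hx, hy⟩ := Prod.ext_iff.1 heq
  obtain ⟨hy', hz⟩ := Prod.ext_iff.1 heq'
  simp only [castPQ, Prod.fst_add, Prod.snd_add, Prod.smul_mk] at hx hy hy' hz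
  have hyy' : y = y' := by
    rw [hpq, ← hy'] at hy
    exact funext fun i ↦ Nat.cast_injective (congrFun hy i)
  subst hyy'
  exact ⟨(x, z), ⟨y, hxy, hyz⟩, Prod.ext hx hz⟩

theorem Prop2'.asymptoticallyDefinable (h : Prop2' P) (hP : IsPeriodic P) (hPd : WellDirected P) :
    AsymptoticallyDefinable P := by
  obtain ⟨R, hcone, hdef, hsub, hray⟩ := h P subset_rfl hP hPd
  have hR : dirSet P = R := hsub.antisymm fun v hv ↦
    have ⟨x, _, hx⟩ := hray v hv
    mem_dirSet_iff_exists_hasRay.2 ⟨x, hx⟩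
  rw [AsymptoticallyDefinable, hR]
  exact ⟨hcone, hdef⟩

end Rays

section RelComp

theorem RelComp.mono {α β γ : Type*} {R R' : Set (α × β)} {S S' : Set (β × γ)} (hR : R ⊆ R')
    (hS : S ⊆ S') : RelComp R S ⊆ RelComp R' S' :=
  fun _ ⟨x, hx, hx'⟩ ↦ ⟨x, hR hx, hS hx'⟩

theorem IsCone.relComp {a m b : ℕ} {R : Set (PairQ a m)} {S : Set (PairQ m b)} (hR : IsCone R)
    (hS : IsCone S) : IsCone (RelComp R S) := by
  refine ⟨⟨0, hR.1, hS.1⟩, ?_, ?_⟩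
  · rintro u ⟨x, hux, hxu⟩ v ⟨y, hvy, hyv⟩
    exact ⟨x + y, hR.2.1 _ hux _ hvy, hS.2.1 _ hxu _ hyv⟩
  · rintro u ⟨x, hux, hxu⟩ l hl
    exact ⟨l • x, hR.2.2 _ hux l hl, hS.2.2 _ hxu l hl⟩

section Composable

variable {A B C : Type*} [AddCommMonoid A] [AddCommMonoid B] [AddCommMonoid C]
  {P₁ : Set (A × B)} {P₂ : Set (B × C)}

/-- The pairs `((v, x), (x, w))` with `(v, x) ∈ P₁` and `(x, w) ∈ P₂`, that is, the witnesses of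
`RelComp P₁ P₂`. -/
def composablePairs (P₁ : Set (A × B)) (P₂ : Set (B × C)) : Set ((A × B) × (B × C)) :=
  {z ∈ P₁ ×ˢ P₂ | z.1.2 = z.2.1}

variable (A B C) in
/-- The projection `((v, x), (y, w)) ↦ (v, w)`, which sends `composablePairs P₁ P₂` onto
`RelComp P₁ P₂`. -/
def outer : (A × B) × (B × C) →+ A × C :=
  (AddMonoidHom.fst A B).prodMap (.snd B C)

theorem image_outer_composablePairs (P₁ : Set (A × B)) (P₂ : Set (B × C)) :
    outer A B C '' composablePairs P₁ P₂ = RelComp P₁ P₂ := by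
  ext p
  constructor
  · rintro ⟨⟨⟨v, x⟩, ⟨x', w⟩⟩, ⟨⟨h₁, h₂⟩, hx : x = x'⟩, rfl⟩
    subst hx
    exact ⟨x, h₁, h₂⟩
  · rintro ⟨x, h₁, h₂⟩
    exact ⟨((p.1, x), (x, p.2)), ⟨⟨h₁, h₂⟩, rfl⟩, rfl⟩

theorem IsPeriodic.composablePairs (h₁ : IsPeriodic P₁) (h₂ : IsPeriodic P₂) :
    IsPeriodic (composablePairs P₁ P₂) :=
  (h₁.prod h₂).inter_eqLocus ((AddMonoidHom.snd A B).comp (.fst _ _))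
    ((AddMonoidHom.fst B C).comp (.snd _ _))

theorem AddWellDirected.composablePairs [IsCancelAdd B] (h₁ : AddWellDirected P₁)
    (h₂ : AddWellDirected P₂) : AddWellDirected (composablePairs P₁ P₂) :=
  (h₁.prod h₂).inter_eqLocus ((AddMonoidHom.snd A B).comp (.fst _ _))
    ((AddMonoidHom.fst B C).comp (.snd _ _))

theorem IsPeriodic.relComp (h₁ : IsPeriodic P₁) (h₂ : IsPeriodic P₂) :
    IsPeriodic (RelComp P₁ P₂) :=
  image_outer_composablePairs P₁ P₂ ▸ (h₁.composablePairs h₂).image _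

theorem AddWellDirected.relComp [IsCancelAdd B] (h₁ : AddWellDirected P₁)
    (h₂ : AddWellDirected P₂) : AddWellDirected (RelComp P₁ P₂) :=
  image_outer_composablePairs P₁ P₂ ▸ (h₁.composablePairs h₂).image _

end Composable

variable {a m b : ℕ} {P₁ : Set (PairN a m)} {P₂ : Set (PairN m b)}

theorem WellDirected.relComp (h₁ : WellDirected P₁) (h₂ : WellDirected P₂) :
    WellDirected (RelComp P₁ P₂) := by
  rw [wellDirected_iff_addWellDirected] at *
  exact h₁.relComp h₂

theorem dirSet_image_outer_subset {T : Set (PairN a m × PairN m b)} (hT : AddWellDirected T)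
    (hT_mid : ∀ z ∈ T, z.1.2 = z.2.1) :
    dirSet (outer _ _ _ '' T) ⊆
      RelComp (dirSet (AddMonoidHom.fst _ _ '' T)) (dirSet (AddMonoidHom.snd _ _ '' T)) := by
  intro v hv
  obtain ⟨p, hp, q, hq, hpump, r, hr, hrv⟩ := hT.exists_isPumpable_of_mem_dirSet_image _ hv
  have hr' : (r : ℚ) ≠ 0 := Nat.cast_ne_zero.2 hr.ne'
  have hv_eq : v = (r : ℚ)⁻¹ • (castPQ (outer _ _ _ q) - castPQ (outer _ _ _ p)) := by
    rw [hrv, inv_smul_smul₀ hr']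
  have ray₁ := (hpump.image (AddMonoidHom.fst _ _)).hasRay.inv_smul hr
  have ray₂ := (hpump.image (AddMonoidHom.snd _ _)).hasRay.inv_smul hr
  refine ⟨(r : ℚ)⁻¹ • ((castPQ q.1).2 - (castPQ p.1).2), mem_dirSet_iff_exists_hasRay.2 ⟨p.1, ?_⟩,
    mem_dirSet_iff_exists_hasRay.2 ⟨p.2, ?_⟩⟩
  · convert! ray₁ using 1
    rw [hv_eq]
    rfl
  · convert! ray₂ using 1
    rw [hv_eq]
    simp only [castPQ, hT_mid p hp, hT_mid q hq]
    rfl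

theorem Prop2'.relComp (h₁p : IsPeriodic P₁) (h₁d : WellDirected P₁) (h₁ : Prop2' P₁)
    (h₂p : IsPeriodic P₂) (h₂d : WellDirected P₂) (h₂ : Prop2' P₂) :
    Prop2' (RelComp P₁ P₂) := by
  intro Q hQ hQp hQd
  rw [wellDirected_iff_addWellDirected] at h₁d h₂d hQd
  set T := composablePairs P₁ P₂ ∩ outer _ _ _ ⁻¹' Q
  have hTp : IsPeriodic T := (h₁p.composablePairs h₂p).inter_preimage hQp _
  have hTd : AddWellDirected T := (h₁d.composablePairs h₂d).inter_preimage hQd _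
  have hTQ : outer _ _ _ '' T = Q := by
    rw [Set.image_inter_preimage, image_outer_composablePairs, Set.inter_eq_right.2 hQ]
  obtain ⟨R₁, hcone₁, hdef₁, hdir₁, hray₁⟩ := h₁ (AddMonoidHom.fst _ _ '' T)
    (by rintro _ ⟨t, ht, rfl⟩; exact ht.1.1.1) (hTp.image _)
    (wellDirected_iff_addWellDirected.2 (hTd.image _))
  obtain ⟨R₂, hcone₂, hdef₂, hdir₂, hray₂⟩ := h₂ (AddMonoidHom.snd _ _ '' T)
    (by rintro _ ⟨t, ht, rfl⟩; exact ht.1.1.2) (hTp.image _)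
    (wellDirected_iff_addWellDirected.2 (hTd.image _))
  refine ⟨RelComp R₁ R₂, hcone₁.relComp hcone₂, hdef₁.relComp hdef₂, ?_, ?_⟩
  · exact hTQ ▸ (dirSet_image_outer_subset hTd fun z hz ↦ hz.1.2).trans
      (RelComp.mono hdir₁ hdir₂)
  · rintro ⟨e, f⟩ ⟨g, heg, hgf⟩
    obtain ⟨_, ⟨z₁, hz₁, rfl⟩, ray₁ : HasRay P₁ z₁.1 (e, g)⟩ := hray₁ _ heg
    obtain ⟨_, ⟨z₂, hz₂, rfl⟩, ray₂ : HasRay P₂ z₂.2 (g, f)⟩ := hray₂ _ hgf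
    have hz : z₁ + z₂ ∈ T := hTp.2 z₁ hz₁ z₂ hz₂
    have ray₁' : HasRay P₁ (z₁ + z₂).1 (e, g) := ray₁.add_mem h₁p hz₂.1.1.1
    have ray₂' : HasRay P₂ (z₁ + z₂).2 (g, f) :=
      add_comm z₂ z₁ ▸ ray₂.add_mem h₂p hz₁.1.1.2
    exact ⟨_, hz.2, ray₁'.relComp ray₂' hz.1.2⟩

end RelComp

/-- The composition of smooth periodic relations satisfying
property (2') is a smooth periodic relation satisfying property (2'). -/
theorem relComp_smooth_prop2' {d' m d'' : ℕ}
    (P₁ : Set (PairN d' m)) (P₂ : Set (PairN m d''))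
    (h₁p : IsPeriodic P₁) (h₁s : IsSmooth P₁) (h₁ : Prop2' P₁)
    (h₂p : IsPeriodic P₂) (h₂s : IsSmooth P₂) (h₂ : Prop2' P₂) :
    IsPeriodic (RelComp P₁ P₂) ∧ IsSmooth (RelComp P₁ P₂) ∧ Prop2' (RelComp P₁ P₂) := by
  have periodic : IsPeriodic (RelComp P₁ P₂) := h₁p.relComp h₂p
  have directed : WellDirected (RelComp P₁ P₂) := h₁s.2.relComp h₂s.2
  have prop2' : Prop2' (RelComp P₁ P₂) := h₁.relComp h₁p h₁s.2 h₂p h₂s.2 h₂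
  exact ⟨periodic, ⟨prop2'.asymptoticallyDefinable periodic directed, directed⟩, prop2'⟩
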